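/- Fix γ > 1, let I = [(γ−1)/b, γ/a] and define T : I → I by T(x) = x/a if (γ−1)/b ≤ x < γ and T(x) = (x−1)/b if γ ≤ x ≤ γ/a. Then for every ergodic T-invariant Borel probability measure μ on I there exists an ergodic σ-invariant Borel probability measure ν on Σ such that μ (regarded as a Borel probability measure on ℝ̄₊ supported in I) is invariant for (T₀,T₁,ν). -/

import Mathlib

/-!
The measure `κ` comes from the natural extension of `(Tinv, μ)`. A *backward orbit* of a map `T` is
a sequence `y₀, y₁, y₂, …` with `T (y (n + 1)) = y n`. For any measure-preserving `T` on a standard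
Borel probability space there is a law `P` on backward orbits all of whose coordinates have law
`μ` (`exists_isBackwardLaw`): it is the Markov chain, given by the Ionescu-Tulcea theorem, whose
transition kernel is the conditional distribution of `x` given `T x`. Every event depending on
`y₀, …, yₙ` is, up to a null set, an event about `yₙ` alone, because the earlier coordinates are
iterated images of `yₙ` (`exists_ae_eq_eval_preimage`). Hence `P` is determined by its two defining
properties (`IsBackwardLaw.ext`), so it is invariant under the shift. It is ergodic as soon as `μ`
is: a shift-invariant event `A` is approximated by events about some `yₙ`, hence by stationarity
by events about `y₀`, hence equals an event `{y₀ ∈ C}`, and `C` is `T`-invariant mod `μ`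
(`IsBackwardLaw.ergodic`).

For `T = Tinv`, let `ω i` record the branch of `Tinv` used at `y (i + 1)`. The generators
`Tmap a b` invert the branches of `Tinv`, so `Tmap a b (ω 0) (y 0) = y 1`: the map `y ↦ (ω, y 0)`
intertwines the shift on backward orbits with the skew product. The image of `P` is `κ`, its first
marginal is an ergodic factor `ν` of `P`, and its second marginal is the law `μ` of `y 0`.
-/

open MeasureTheory Filter
open scoped ENNReal

/-- The generators `T₀(x) = a·x`, `T₁(x) = b·x + 1`, extended to the one-point
compactification `ℝ̄₊ = [0,∞]` (modelled by `ℝ≥0∞`) by `T₀(∞) = T₁(∞) = ∞`. -/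
noncomputable def Tmap (a b : ℝ) (i : Bool) (x : ℝ≥0∞) : ℝ≥0∞ :=
  if i then ENNReal.ofReal b * x + 1 else ENNReal.ofReal a * x

/-- The one-sided full shift `σ` on `Σ = {0,1}^{ℕ₀}`. -/
def shiftMap (ω : ℕ → Bool) : ℕ → Bool := fun i => ω (i + 1)

/-- The skew product `τ(ω̄, x) = (σ(ω̄), T_{ω̄₀}(x))` on `X = Σ × ℝ̄₊`. -/
noncomputable def skewMap (a b : ℝ) (z : (ℕ → Bool) × ℝ≥0∞) : (ℕ → Bool) × ℝ≥0∞ :=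
  (shiftMap z.1, Tmap a b (z.1 0) z.2)

/-- A Borel probability measure `μ` on `ℝ̄₊` with `μ({∞}) = 0` is *invariant for*
`(T₀, T₁, ν)` if there is a `τ`-invariant Borel probability measure `κ` on `Σ × ℝ̄₊`
whose marginal on `Σ` is `ν` and whose marginal on `ℝ̄₊` is `μ`. -/
def IsInvariantFor (a b : ℝ) (ν : Measure (ℕ → Bool)) (μ : Measure ℝ≥0∞) : Prop :=
  IsProbabilityMeasure μ ∧ μ {⊤} = 0 ∧
    ∃ κ : Measure ((ℕ → Bool) × ℝ≥0∞), IsProbabilityMeasure κ ∧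
      MeasurePreserving (skewMap a b) κ κ ∧
      κ.map Prod.fst = ν ∧ κ.map Prod.snd = μ

/-- The Lyapunov exponent `λ(ν) = ν(C₀)·ln a + ν(C₁)·ln b` of a shift-invariant
measure `ν` on `Σ`, where `Cᵢ = {ω̄ : ω̄₀ = i}`. -/
noncomputable def lyap (a b : ℝ) (ν : Measure (ℕ → Bool)) : ℝ :=
  (ν {ω | ω 0 = false}).toReal * Real.log a + (ν {ω | ω 0 = true}).toReal * Real.log b

/-- The piecewise-affine map of Section 5: on `I = [(γ−1)/b, γ/a]` it is given by
`T(x) = x/a` for `(γ−1)/b ≤ x < γ` and `T(x) = (x−1)/b` for `γ ≤ x ≤ γ/a`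
(we extend it to all of `ℝ` by the same formulas). -/
noncomputable def Tinv (a b γ : ℝ) (x : ℝ) : ℝ := if x < γ then x / a else (x - 1) / b

/-! ### Stationary backward orbits: uniqueness and ergodicity -/

section NaturalExtension

open ProbabilityTheory Finset Preorder

variable {X : Type*} [MeasurableSpace X] {T : X → X} {μ : Measure X} {P : Measure (ℕ → X)}

/-- `P` is the law of a stationary random backward orbit of `T`: all coordinates have law `μ`,
and almost surely `T` maps each coordinate to the preceding one. -/
structure IsBackwardLaw (T : X → X) (μ : Measure X) (P : Measure (ℕ → X)) : Prop where
  prob : IsProbabilityMeasure P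
  map_eval : ∀ n, P.map (fun y => y n) = μ
  ae_step : ∀ n, ∀ᵐ y ∂P, T (y (n + 1)) = y n

/-- The one-sided shift on sequences in `X`. -/
def seqShift (y : ℕ → X) : ℕ → X := fun i => y (i + 1)

lemma measurable_seqShift : Measurable (seqShift : (ℕ → X) → ℕ → X) :=
  measurable_pi_lambda _ fun i => measurable_pi_apply (i + 1)

lemma iterate_eq_of_step {Y : Type*} {T : Y → Y} {y : ℕ → Y} (h : ∀ n, T (y (n + 1)) = y n) (i k : ℕ) :
    T^[k] (y (i + k)) = y i := by
  induction k with
  | zero => rfl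
  | succ k ih => rw [Function.iterate_succ_apply, ← add_assoc, h, ih]

/-- On backward orbits, a cylinder event is an event about a single, late enough, coordinate. The
coordinate `n` and the set `C` depend on `T` only, not on the law `P`. -/
lemma exists_ae_eq_eval_preimage (hT : Measurable T) {B : Set (ℕ → X)}
    (hB : B ∈ measurableCylinders (fun _ : ℕ => X)) :
    ∃ (n : ℕ) (C : Set X), MeasurableSet C ∧
      ∀ P : Measure (ℕ → X), (∀ n, ∀ᵐ y ∂P, T (y (n + 1)) = y n) →
        ∀ᵐ y ∂P, y ∈ B ↔ y n ∈ C := by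
  obtain ⟨s, S, hS, rfl⟩ := (mem_measurableCylinders B).1 hB
  refine ⟨s.sup id, {x | (fun i : s => T^[s.sup id - i] x) ∈ S}, ?_, fun P hP => ?_⟩
  · exact (measurable_pi_lambda _ fun i : s => hT.iterate _) hS
  · filter_upwards [ae_all_iff.2 hP] with y hy
    have key : s.restrict y = fun i : s => T^[s.sup id - i] (y (s.sup id)) := by
      ext i
      have hi : (i : ℕ) ≤ s.sup id := Finset.le_sup (f := id) i.2
      have := iterate_eq_of_step hy i (s.sup id - i)
      rw [Nat.add_sub_cancel' hi] at this
      exact this.symm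
    rw [mem_cylinder, key]

/-- The law of a stationary backward orbit is unique. -/
lemma IsBackwardLaw.ext (hT : Measurable T) {Q : Measure (ℕ → X)}
    (hP : IsBackwardLaw T μ P) (hQ : IsBackwardLaw T μ Q) : P = Q := by
  have := hP.prob
  have := hQ.prob
  refine ext_of_generate_finite _ generateFrom_measurableCylinders.symm
    isPiSystem_measurableCylinders (fun B hB => ?_) (by simp)
  obtain ⟨n, C, hC, h⟩ := exists_ae_eq_eval_preimage hT hB
  have aux : ∀ R : Measure (ℕ → X), IsBackwardLaw T μ R → R B = μ C := fun R hR => by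
    rw [← hR.map_eval n, Measure.map_apply (measurable_pi_apply n) hC]
    exact measure_congr (eventuallyEq_set.2 (h R hR.ae_step))
  rw [aux P hP, aux Q hQ]

lemma IsBackwardLaw.measurePreserving [StandardBorelSpace X] (hT : Measurable T) (hP : IsBackwardLaw T μ P) :
    MeasurePreserving seqShift P P := by
  have := hP.prob
  refine ⟨measurable_seqShift, IsBackwardLaw.ext hT ⟨?_, fun n => ?_, fun n => ?_⟩ hP⟩
  · exact Measure.isProbabilityMeasure_map measurable_seqShift.aemeasurable
  · rw [Measure.map_map (measurable_pi_apply n) measurable_seqShift]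
    exact hP.map_eval (n + 1)
  · have hmeas : MeasurableSet {y : ℕ → X | T (y (n + 1)) = y n} :=
      measurableSet_eq_fun (hT.comp (measurable_pi_apply (n + 1))) (measurable_pi_apply n)
    rw [ae_map_iff measurable_seqShift.aemeasurable hmeas]
    exact hP.ae_step (n + 1)

lemma IsBackwardLaw.ergodic [StandardBorelSpace X] (hT : Ergodic T μ) (hP : IsBackwardLaw T μ P) :
    Ergodic seqShift P := by
  have := hP.prob
  have hshift := hP.measurePreserving hT.measurable
  refine ⟨hshift, ⟨fun A hA hinv => ?_⟩⟩
  have hdense : P.MeasureDense (measurableCylinders (fun _ : ℕ => X)) :=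
    .of_generateFrom_isSetAlgebra_finite _ isSetAlgebra_measurableCylinders
      generateFrom_measurableCylinders.symm
  -- By stationarity, `A` is approximated by events about the coordinate `0`.
  have happrox : ∀ k : ℕ, ∃ C : Set X, MeasurableSet C ∧
      P (symmDiff A {y | y 0 ∈ C}) ≤ ENNReal.ofReal ((1 / 2) ^ k) := fun k => by
    obtain ⟨B, hB, hAB⟩ := hdense.approx A hA (measure_ne_top _ _) ((1 / 2) ^ k) (by positivity)
    obtain ⟨n, C, hC, h⟩ := exists_ae_eq_eval_preimage hT.measurable hB
    refine ⟨C, hC, le_of_eq_of_le ?_ hAB.le⟩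
    have hn : seqShift^[n] ⁻¹' A = A := by
      rw [Set.preimage_iterate_eq]
      exact Function.iterate_fixed hinv n
    have happ : ∀ y : ℕ → X, seqShift^[n] y 0 = y n := fun y => by
      have : ∀ (n m : ℕ) (y : ℕ → X), seqShift^[n] y m = y (m + n) := fun n => by
        induction n with
        | zero => intro m y; rfl
        | succ n ih => intro m y; rw [Function.iterate_succ_apply, ih]; rfl
      rw [this, zero_add]
    have hms : MeasurableSet (symmDiff A {y : ℕ → X | y 0 ∈ C}) :=
      hA.symmDiff (measurable_pi_apply 0 hC)
    rw [← (hshift.iterate n).measure_preimage hms.nullMeasurableSet]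
    refine measure_congr (eventuallyEq_set.2 ?_)
    filter_upwards [h P hP.ae_step] with y hy
    have h1 : seqShift^[n] y ∈ A ↔ y ∈ A := by
      conv_rhs => rw [← hn]
      rfl
    simp only [Set.mem_preimage, Set.mem_symmDiff, Set.mem_ofPred_eq, h1, happ, hy]
  choose C hC hAC using happrox
  have hsum : ∑' k, P (symmDiff A {y | y 0 ∈ C k}) ≠ ⊤ := by
    refine ne_top_of_le_ne_top ?_ (ENNReal.tsum_le_tsum hAC)
    rw [← ENNReal.ofReal_tsum_of_nonneg (fun _ => by positivity) summable_geometric_two]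
    exact ENNReal.ofReal_ne_top
  -- By Borel-Cantelli, `A` is the event `y 0 ∈ limsup C`.
  let D : Set X := {x | ∃ᶠ k in atTop, x ∈ C k}
  have hD : MeasurableSet D := by
    have : D = limsup C atTop := by
      ext x
      simp [D, mem_limsup_iff_frequently_mem]
    rw [this]
    exact MeasurableSet.measurableSet_limsup hC
  have hAD : ∀ᵐ y ∂P, y ∈ A ↔ y 0 ∈ D := by
    filter_upwards [ae_eventually_notMem hsum] with y hy
    have hy' : ∀ᶠ k in atTop, (y ∈ A ↔ y 0 ∈ C k) := by
      filter_upwards [hy] with k hk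
      simp only [Set.mem_symmDiff, Set.mem_ofPred_eq] at hk
      tauto
    change y ∈ A ↔ ∃ᶠ k in atTop, y 0 ∈ C k
    rw [← frequently_congr hy']
    simp
  -- Comparing `A` with its shift shows that `D` is `T`-invariant modulo `μ`.
  have hTD : ∀ᵐ x ∂μ, T x ∈ D ↔ x ∈ D := by
    have hmeas : MeasurableSet {x | T x ∈ D ↔ x ∈ D} :=
      MeasurableSet.iff (hT.measurable hD) hD
    have hmeas1 : Measurable fun y : ℕ → X => y 1 := measurable_pi_apply 1
    rw [← hP.map_eval 1, ae_map_iff hmeas1.aemeasurable hmeas]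
    filter_upwards [hAD, hshift.quasiMeasurePreserving.ae hAD, hP.ae_step 0] with y h0 h1 hs
    have h2 : seqShift y ∈ A ↔ y ∈ A := by
      conv_rhs => rw [← hinv]
      rfl
    rw [zero_add] at hs
    rw [hs, ← h0, ← h2, h1]
    rfl
  have hmap : MeasurePreserving (fun y : ℕ → X => y 0) P μ :=
    ⟨measurable_pi_apply 0, hP.map_eval 0⟩
  have hconst := hT.quasiErgodic.aeconst_set₀ hD.nullMeasurableSet (eventuallyEq_set.2 hTD)
  have hpre := (hmap.aeconst_preimage hD.nullMeasurableSet).2 hconst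
  exact hpre.congr (eventuallyEq_set.2 (hAD.mono fun y hy => hy.symm))

/-! ### Existence of stationary backward orbits -/

/-- A kernel which looks at its input through `e` only may be run on the image under `e`. -/
lemma map_compProd_comap {H : Type*} [MeasurableSpace H] {ρ : Measure H} [IsFiniteMeasure ρ]
    {η : Kernel X X} [IsMarkovKernel η] {e : H → X} (he : Measurable e) :
    (ρ ⊗ₘ η.comap e he).map (fun p => (e p.1, p.2)) = ρ.map e ⊗ₘ η := by
  have hm : Measurable fun p : H × X => (e p.1, p.2) := by fun_prop
  ext s hs
  rw [Measure.map_apply hm hs, Measure.compProd_apply (hm hs), Measure.compProd_apply hs,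
    lintegral_map (Kernel.measurable_kernel_prodMk_left hs) he]
  rfl

/-- Every measure-preserving map of a standard Borel probability space has stationary backward
orbits: run the Markov chain which moves from `x` to a random `T`-preimage of `x`, distributed
according to `μ` conditioned on that fibre. -/
lemma exists_isBackwardLaw [StandardBorelSpace X] [IsProbabilityMeasure μ]
    (hT : MeasurePreserving T μ μ) : ∃ P : Measure (ℕ → X), IsBackwardLaw T μ P := by
  have : Nonempty X := nonempty_of_isProbabilityMeasure μ
  let η : Kernel X X := condDistrib (fun x => x) T μ
  have hη : μ ⊗ₘ η = μ.map fun x => (T x, x) := by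
    have := compProd_map_condDistrib (mβ := inferInstance) (μ := μ) (X := T)
      (Y := fun x => x) aemeasurable_id'
    rwa [hT.map_eq] at this
  let k : (n : ℕ) → Kernel ((i : Iic n) → X) X :=
    fun n => η.comap (fun h => h ⟨n, mem_Iic.2 le_rfl⟩) (measurable_pi_apply _)
  let P : Measure (ℕ → X) := Kernel.trajMeasure (X := fun _ => X) μ k
  have hprob : IsProbabilityMeasure P := inferInstance
  -- The Markov property: each step of the chain uses the kernel `η` from the current state.
  have hpair : ∀ n, P.map (fun y => (y n, y (n + 1))) = P.map (fun y => y n) ⊗ₘ η := fun n => by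
    have h := Kernel.map_frestrictLe_trajMeasure_compProd_eq_map_trajMeasure
      (X := fun _ => X) (μ₀ := μ) (κ := k) (a := n)
    have h' := congrArg (Measure.map
      (fun p : ((i : Iic n) → X) × X => (p.1 ⟨n, mem_Iic.2 le_rfl⟩, p.2))) h
    rw [Measure.map_map (by fun_prop) (by fun_prop)] at h'
    refine h'.symm.trans ((map_compProd_comap (measurable_pi_apply _)).trans ?_)
    rw [Measure.map_map (by fun_prop) (by fun_prop)]
    rfl
  have h0 : P.map (fun y => y 0) = μ := by
    have h : P.map (frestrictLe 0) = μ.map (MeasurableEquiv.piUnique _).symm := by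
      change Measure.map _ ((Kernel.traj (X := fun _ => X) k 0) ∘ₘ
        (μ.map (MeasurableEquiv.piUnique _).symm)) = _
      rw [Measure.map_comp _ _ (by fun_prop),
        Kernel.traj_map_frestrictLe, Kernel.partialTraj_self, Measure.id_comp]
    have h' := congrArg (Measure.map
      (fun p : (i : Iic 0) → X => p ⟨0, mem_Iic.2 le_rfl⟩)) h
    rw [Measure.map_map (by fun_prop) (by fun_prop),
      Measure.map_map (by fun_prop) (MeasurableEquiv.measurable _)] at h'
    exact h'.trans Measure.map_id
  have hmarg : ∀ n, P.map (fun y => y n) = μ := fun n => by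
    induction n with
    | zero => exact h0
    | succ n ih =>
      have h := congrArg (Measure.map Prod.snd) (hpair n)
      rw [ih, hη, Measure.map_map measurable_snd (by fun_prop),
        Measure.map_map measurable_snd (hT.measurable.prodMk measurable_id')] at h
      exact h.trans Measure.map_id
  refine ⟨P, hprob, hmarg, fun n => ?_⟩
  have hae : ∀ᵐ p ∂P.map (fun y => (y n, y (n + 1))), T p.2 = p.1 := by
    have hmeas : MeasurableSet {p : X × X | T p.2 = p.1} :=
      measurableSet_eq_fun (hT.measurable.comp measurable_snd) measurable_fst
    rw [hpair, hmarg, hη, ae_map_iff (hT.measurable.prodMk measurable_id').aemeasurable hmeas]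
    simp
  exact ae_of_ae_map (by fun_prop) hae

end NaturalExtension

/-! ### Coding backward orbits of `Tinv` -/

/-- Sends a backward orbit of `Tinv` to a point of `Σ × ℝ̄₊`: the `i`-th symbol records which
branch of `Tinv` is used at `y (i + 1)`, and the second component is the starting point `y 0`. -/
noncomputable def coding (γ : ℝ) (y : ℕ → ℝ) : (ℕ → Bool) × ℝ≥0∞ :=
  (fun i => decide (γ ≤ y (i + 1)), ENNReal.ofReal (y 0))

lemma measurable_coding (γ : ℝ) : Measurable (coding γ) := by
  refine Measurable.prodMk (measurable_pi_lambda _ fun i => ?_)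
    (ENNReal.measurable_ofReal.comp (measurable_pi_apply 0))
  exact measurable_to_bool (by
    have : (fun y : ℕ → ℝ => decide (γ ≤ y (i + 1))) ⁻¹' {true} = {y | γ ≤ y (i + 1)} := by
      ext y; simp
    rw [this]
    exact measurableSet_le measurable_const (measurable_pi_apply _))

lemma measurable_shiftMap : Measurable shiftMap :=
  measurable_pi_lambda _ fun i => measurable_pi_apply (i + 1)

lemma measurable_skewMap (a b : ℝ) : Measurable (skewMap a b) := by
  refine (measurable_shiftMap.comp measurable_fst).prodMk ?_
  refine Measurable.ite ?_ (by fun_prop) (by fun_prop)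
  have h : Measurable fun z : (ℕ → Bool) × ℝ≥0∞ => z.1 0 :=
    (measurable_pi_apply 0).comp measurable_fst
  exact h (measurableSet_singleton true)

/-- The generators invert the branches of `Tinv`. Since `γ ≤ x` forces `0 ≤ (x - 1) / b`, the
truncation of negative numbers in `ENNReal.ofReal` matters only on the lower branch; there
`x / a` and `x` have the same sign, so both sides are truncated together. -/
lemma Tmap_Tinv {a b γ : ℝ} (ha : 0 < a) (hb : 1 < b) (hγ : 1 < γ) (x : ℝ) :
    Tmap a b (decide (γ ≤ x)) (ENNReal.ofReal (Tinv a b γ x)) = ENNReal.ofReal x := by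
  by_cases h : γ ≤ x
  · have hx : 0 ≤ (x - 1) / b := div_nonneg (by linarith) (by linarith)
    simp only [Tmap, Tinv, h, decide_true, if_true, not_lt.2 h, if_false]
    rw [← ENNReal.ofReal_mul (by linarith), ← ENNReal.ofReal_one,
      ← ENNReal.ofReal_add (mul_nonneg (by linarith) hx) zero_le_one,
      mul_div_cancel₀ _ (by linarith), sub_add_cancel]
  · simp only [Tmap, Tinv, h, not_le.1 h, decide_false, if_true, Bool.false_eq_true, if_false]
    rw [← ENNReal.ofReal_mul ha.le, mul_div_cancel₀ _ ha.ne']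

/-- **Lemma 5.5.** Fix `0 < a < 1 < b` and `γ > 1`. For every ergodic `T`-invariant
Borel probability measure `μ` on `I = [(γ−1)/b, γ/a]` there is an ergodic `σ`-invariant
Borel probability measure `ν` on `Σ` such that `μ` (regarded, via `ENNReal.ofReal`,
as a Borel probability measure on `ℝ̄₊` supported in `I`) is invariant for
`(T₀, T₁, ν)`. -/
theorem invariant_over_some_nu (a b γ : ℝ) (ha : 0 < a) (ha1 : a < 1) (hb : 1 < b)
    (hγ : 1 < γ)
    (μ : Measure ℝ) [IsProbabilityMeasure μ]
    (hsupp : μ ((Set.Icc ((γ - 1) / b) (γ / a))ᶜ) = 0)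
    (hμ : Ergodic (Tinv a b γ) μ) :
    ∃ ν : Measure (ℕ → Bool), IsProbabilityMeasure ν ∧ Ergodic shiftMap ν ∧
      IsInvariantFor a b ν (μ.map ENNReal.ofReal) := by
  obtain ⟨P, hP⟩ := exists_isBackwardLaw hμ.toMeasurePreserving
  have := hP.prob
  have hcode := measurable_coding γ
  have hT := hμ.measurable
  have hshift := hP.measurePreserving hT
  have hfst : MeasurePreserving (fun y => (coding γ y).1) P (P.map fun y => (coding γ y).1) :=
    ⟨measurable_fst.comp hcode, rfl⟩
  refine ⟨P.map fun y => (coding γ y).1,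
    Measure.isProbabilityMeasure_map hfst.measurable.aemeasurable,
    hfst.ergodic_of_ergodic_semiconj (hP.ergodic hμ) measurable_shiftMap fun y => rfl,
    Measure.isProbabilityMeasure_map ENNReal.measurable_ofReal.aemeasurable, ?_,
    P.map (coding γ), Measure.isProbabilityMeasure_map hcode.aemeasurable,
    ⟨measurable_skewMap a b, ?_⟩, ?_, ?_⟩
  · rw [Measure.map_apply ENNReal.measurable_ofReal (measurableSet_singleton _)]
    simp [Set.preimage]
  · have hconj : skewMap a b ∘ coding γ =ᵐ[P] coding γ ∘ seqShift := by
      filter_upwards [hP.ae_step 0] with y hy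
      refine Prod.ext rfl ?_
      change Tmap a b (decide (γ ≤ y 1)) (ENNReal.ofReal (y 0)) = ENNReal.ofReal (y 1)
      rw [← hy, Tmap_Tinv ha hb hγ]
    rw [Measure.map_map (measurable_skewMap a b) hcode, Measure.map_congr hconj,
      ← Measure.map_map hcode hshift.measurable, hshift.map_eq]
  · rw [Measure.map_map measurable_fst hcode]
    rfl
  · rw [Measure.map_map measurable_snd hcode, ← hP.map_eval 0,
      Measure.map_map ENNReal.measurable_ofReal (measurable_pi_apply 0)]
    rfl
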